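/- Let O be a countable set, D a set with an adjacency relation ∼, and A : D → Δ(O) a randomized algorithm. Then A is ε-differentially private with respect to ∼ if and only if for all d1 ∼ d2 the distributions A(d1) and A(d2) are related by the ε-approximate lifting of equality, i.e. A(d1) (=)^ε A(d2). -/

import Mathlib

open scoped BigOperators

noncomputable section

/-- Mass that a (sub)distribution assigns to a set of outcomes. -/
def mass {A : Type*} (μ : A → ℝ) (E : Set A) : ℝ := ∑' a : E, μ a

/-- The ε-divergence `Δ_ε(μ1, μ2) = sup_{E ⊆ A} (μ1(E) − exp(ε)·μ2(E))`. -/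
def eDiv {A : Type*} (ε : ℝ) (μ1 μ2 : A → ℝ) : ℝ :=
  ⨆ E : Set A, (mass μ1 E - Real.exp ε * mass μ2 E)

/-- `μ` is a probability distribution: pointwise nonnegative with total mass 1. -/
def IsProb {A : Type*} (μ : A → ℝ) : Prop :=
  (∀ a, 0 ≤ μ a) ∧ (∑' a, μ a) = 1

/-- `μ` is a subdistribution: pointwise nonnegative, summable, with total mass at most 1. -/
def IsSubProb {A : Type*} (μ : A → ℝ) : Prop :=
  (∀ a, 0 ≤ μ a) ∧ Summable μ ∧ (∑' a, μ a) ≤ 1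

/-- ε-approximate lifting `μ1 (Ψ)^ε μ2` of a relation `Ψ` between two
probability distributions. -/
def Lifting {A B : Type*} (ε : ℝ) (Ψ : A → B → Prop) (μ1 : A → ℝ) (μ2 : B → ℝ) : Prop :=
  ∃ μL μR : A × B → ℝ, IsProb μL ∧ IsProb μR ∧
    (∀ a, (∑' b, μL (a, b)) = μ1 a) ∧
    (∀ b, (∑' a, μR (a, b)) = μ2 b) ∧
    (∀ p : A × B, (0 < μL p ∨ 0 < μR p) → Ψ p.1 p.2) ∧
    eDiv ε μL μR ≤ 0

/-- `A` is ε-differentially private w.r.t. the adjacency relation `adj`. -/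
def DP {D O : Type*} (ε : ℝ) (adj : D → D → Prop) (A : D → O → ℝ) : Prop :=
  ∀ d1 d2, adj d1 d2 → ∀ o, A d1 o ≤ Real.exp ε * A d2 o

/-- Monadic bind of distributions: `(bind μ f)(b) = Σ_a μ(a)·f(a)(b)`. -/
def pbind {A B : Type*} (μ : A → ℝ) (f : A → B → ℝ) : B → ℝ :=
  fun b => ∑' a, μ a * f a b

/-- Dirac (point-mass) distribution at `a`. -/
def punit {A : Type*} [DecidableEq A] (a : A) : A → ℝ :=
  fun x => if x = a then 1 else 0

/-- Pushforward of a distribution along `g`: `(map g μ)(b) = Σ_{a : g(a)=b} μ(a)`. -/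
def pmap {A B : Type*} (g : A → B) (μ : A → ℝ) : B → ℝ :=
  fun b => ∑' a : {a // g a = b}, μ (a : A)

/-- Discrete Laplace distribution with mean `v` and (inverse scale) parameter `ε`:
`dLap(v, ε)(z) = ((exp ε − 1)/(exp ε + 1))·exp(−ε·|z − v|)`. -/
def dLap (v : ℤ) (ε : ℝ) : ℤ → ℝ :=
  fun z => ((Real.exp ε - 1) / (Real.exp ε + 1)) * Real.exp (-ε * ((|z - v| : ℤ) : ℝ))

end

/-!
A divergence `Δ_ε(μ, ν) ≤ 0` can be tested on singletons, so it is a pointwise inequality. A witness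
of a lifting of equality is supported on the diagonal, where it is determined by its marginals: the
only possible witnesses are the pushforwards of the two distributions along `a ↦ (a, a)`.
-/

theorem mass_singleton {A : Type*} (μ : A → ℝ) (a : A) : mass μ {a} = μ a :=
  tsum_singleton a μ

theorem mass_sub_mul_mass {A : Type*} {μ ν : A → ℝ} (hμ : Summable μ) (hν : Summable ν)
    (c : ℝ) (E : Set A) : mass μ E - c * mass ν E = mass (fun a => μ a - c * ν a) E := by
  unfold mass
  rw [← tsum_mul_left]
  exact ((hμ.subtype E).tsum_sub ((hν.subtype E).mul_left c)).symm

theorem mass_le_tsum_abs {A : Type*} {μ : A → ℝ} (hμ : Summable μ) (E : Set A) :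
    mass μ E ≤ ∑' a, |μ a| :=
  calc
    mass μ E ≤ ∑' a : E, |μ a| :=
      (hμ.subtype E).tsum_le_tsum (fun a => le_abs_self (μ a)) (hμ.abs.subtype E)
    _ ≤ ∑' a, |μ a| := hμ.abs.tsum_subtype_le _ E fun a => abs_nonneg (μ a)

theorem bddAbove_range_mass_sub_mul_mass {A : Type*} {μ ν : A → ℝ} (hμ : Summable μ)
    (hν : Summable ν) (c : ℝ) : BddAbove (Set.range fun E : Set A => mass μ E - c * mass ν E) := by
  refine ⟨∑' a, |μ a - c * ν a|, Set.forall_mem_range.2 fun E => ?_⟩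
  rw [mass_sub_mul_mass hμ hν]
  exact mass_le_tsum_abs (hμ.sub (hν.mul_left _)) E

theorem eDiv_nonpos_iff {A : Type*} {μ ν : A → ℝ} (hμ : Summable μ) (hν : Summable ν) {ε : ℝ} :
    eDiv ε μ ν ≤ 0 ↔ ∀ a, μ a ≤ Real.exp ε * ν a := by
  rw [eDiv, ciSup_le_iff (bddAbove_range_mass_sub_mul_mass hμ hν _)]
  refine ⟨fun h a => ?_, fun h E => ?_⟩
  · simpa only [mass_singleton, sub_nonpos] using h {a}
  · rw [mass_sub_mul_mass hμ hν]
    exact tsum_nonpos fun a => sub_nonpos.2 (h a)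

theorem IsProb.summable {A : Type*} {μ : A → ℝ} (hμ : IsProb μ) : Summable μ :=
  of_not_not fun h => zero_ne_one ((tsum_eq_zero_of_not_summable h).symm.trans hμ.2)

theorem isProb_pmap {A B : Type*} {μ : A → ℝ} (hμ : IsProb μ) (g : A → B) : IsProb (pmap g μ) :=
  ⟨fun _ => tsum_nonneg fun a => hμ.1 a,
    (hμ.summable.hasSum.tsum_fiberwise g).tsum_eq.trans hμ.2⟩

theorem pmap_le_mul_pmap {A B : Type*} {μ ν : A → ℝ} (hμ : Summable μ) (hν : Summable ν) {c : ℝ}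
    (h : ∀ a, μ a ≤ c * ν a) (g : A → B) (b : B) : pmap g μ b ≤ c * pmap g ν b :=
  calc
    pmap g μ b ≤ ∑' a : {a // g a = b}, c * ν a :=
      (hμ.subtype _).tsum_le_tsum (fun a => h a) ((hν.subtype _).mul_left c)
    _ = c * pmap g ν b := tsum_mul_left

theorem pmap_apply_of_injective {A B : Type*} {g : A → B} (hg : g.Injective) (μ : A → ℝ) (a : A) :
    pmap g μ (g a) = μ a := by
  have fiber_eq : {x | g x = g a} = {a} := Set.ext fun _ => hg.eq_iff
  change mass μ {x | g x = g a} = μ a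
  rw [fiber_eq, mass_singleton]

theorem support_pmap_subset_range {A B : Type*} (g : A → B) (μ : A → ℝ) :
    (pmap g μ).support ⊆ Set.range g := by
  intro b hb
  by_contra hbg
  have : IsEmpty {a // g a = b} := ⟨fun a => hbg ⟨a, a.2⟩⟩
  exact hb tsum_empty

section Diagonal

variable {A M : Type*} [AddCommMonoid M] [TopologicalSpace M] {κ : A × A → M}

theorem tsum_fst_marginal_of_support_subset_diagonal (hκ : κ.support ⊆ Set.diagonal A) (a : A) :
    ∑' b, κ (a, b) = κ (a, a) :=
  tsum_eq_single a fun _ hb => Function.notMem_support.1 fun h => hb (hκ h).symm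

theorem tsum_snd_marginal_of_support_subset_diagonal (hκ : κ.support ⊆ Set.diagonal A) (b : A) :
    ∑' a, κ (a, b) = κ (b, b) :=
  tsum_eq_single b fun _ ha => Function.notMem_support.1 fun h => ha (hκ h)

end Diagonal

theorem lifting_of_le_exp_mul {A : Type*} {ε : ℝ} {Ψ : A → A → Prop} (hΨ : ∀ a, Ψ a a)
    {μ ν : A → ℝ} (hμ : IsProb μ) (hν : IsProb ν) (h : ∀ a, μ a ≤ Real.exp ε * ν a) :
    Lifting ε Ψ μ ν := by
  let diag : A → A × A := fun a => (a, a)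
  have diag_injective : diag.Injective := fun _ _ hab => congrArg Prod.fst hab
  have support_subset (ρ : A → ℝ) : (pmap diag ρ).support ⊆ Set.diagonal A :=
    (support_pmap_subset_range diag ρ).trans Set.range_diag.subset
  refine ⟨pmap diag μ, pmap diag ν, isProb_pmap hμ diag, isProb_pmap hν diag,
    fun a => ?fst_marginal, fun b => ?snd_marginal, ?support, ?divergence⟩
  case fst_marginal =>
    exact (tsum_fst_marginal_of_support_subset_diagonal (support_subset μ) a).trans
      (pmap_apply_of_injective diag_injective μ a)
  case snd_marginal =>
    exact (tsum_snd_marginal_of_support_subset_diagonal (support_subset ν) b).trans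
      (pmap_apply_of_injective diag_injective ν b)
  case support =>
    rintro ⟨a, b⟩ hab
    obtain rfl : a = b :=
      hab.elim (fun hL => support_subset μ hL.ne') (fun hR => support_subset ν hR.ne')
    exact hΨ a
  case divergence =>
    exact (eDiv_nonpos_iff (isProb_pmap hμ diag).summable (isProb_pmap hν diag).summable).2
      (pmap_le_mul_pmap hμ.summable hν.summable h diag)

theorem Lifting.le_exp_mul {A : Type*} {ε : ℝ} {Ψ : A → A → Prop} (hΨ : ∀ a b, Ψ a b → a = b)
    {μ ν : A → ℝ} (h : Lifting ε Ψ μ ν) (a : A) : μ a ≤ Real.exp ε * ν a := by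
  obtain ⟨μL, μR, hL, hR, fst_marginal, snd_marginal, support_subset, divergence⟩ := h
  have support_left : μL.support ⊆ Set.diagonal A := fun p hp =>
    hΨ _ _ (support_subset p (.inl ((hL.1 p).lt_of_ne' hp)))
  have support_right : μR.support ⊆ Set.diagonal A := fun p hp =>
    hΨ _ _ (support_subset p (.inr ((hR.1 p).lt_of_ne' hp)))
  rw [← fst_marginal, ← snd_marginal, tsum_fst_marginal_of_support_subset_diagonal support_left,
    tsum_snd_marginal_of_support_subset_diagonal support_right]
  exact (eDiv_nonpos_iff hL.summable hR.summable).1 divergence (a, a)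

theorem lifting_eq_iff {A : Type*} {ε : ℝ} {μ ν : A → ℝ} (hμ : IsProb μ) (hν : IsProb ν) :
    Lifting ε (fun a b => a = b) μ ν ↔ ∀ a, μ a ≤ Real.exp ε * ν a :=
  ⟨Lifting.le_exp_mul fun _ _ => id, lifting_of_le_exp_mul (fun _ => rfl) hμ hν⟩

theorem dp_iff_lifting_eq_general {D O : Type*} (ε : ℝ) (adj : D → D → Prop) (A : D → O → ℝ)
    (hA : ∀ d, IsProb (A d)) :
    DP ε adj A ↔ ∀ d1 d2, adj d1 d2 → Lifting ε (fun a b => a = b) (A d1) (A d2) :=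
  forall₃_congr fun d1 d2 _ => (lifting_eq_iff (hA d1) (hA d2)).symm

/-- `A` is ε-differentially private w.r.t. `∼` iff for all adjacent `d1 ∼ d2`,
`A d1 (=)^ε A d2`. -/
theorem dp_iff_lifting_eq {D O : Type*} [Countable O] (ε : ℝ) (hε : 0 ≤ ε)
    (adj : D → D → Prop) (A : D → O → ℝ) (hA : ∀ d, IsProb (A d)) :
    DP ε adj A ↔ ∀ d1 d2, adj d1 d2 → Lifting ε (fun a b => a = b) (A d1) (A d2) :=
  dp_iff_lifting_eq_general ε adj A hA
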